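/- Let V be a commutative ring and m ⊆ V an ideal satisfying m·m = m such that m̃ = m ⊗_V m is a flat V-module of projective dimension at most 1. Let R be a commutative V-algebra, I ⊆ R a nilpotent ideal, and R' = R/I. Let P' be an almost projective R'-module. Then: (i) there exist an almost projective R-module P and an R'-linear map σ : P/IP → P' which is an almost isomorphism (its kernel and cokernel are annihilated by m); (ii) if moreover P' is almost finitely presented over R', then P can be chosen to be almost finitely presented over R. -/

import Mathlib

universe u v

open CategoryTheory

/-- Almost projective module: `m·Ext^i_R(M, N) = 0` for all `N` and all `i > 0`. -/
def IsAlmostProjective (V : Type v) [CommRing V] (m : Ideal V)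
    (R : Type u) [CommRing R] [Algebra V R]
    (M : Type u) [AddCommGroup M] [Module R M] : Prop :=
  ∀ i : ℕ, 0 < i → ∀ N : ModuleCat.{u} R, ∀ a ∈ m,
    ∀ x : ((Ext R (ModuleCat.{u} R) i).obj (Opposite.op (ModuleCat.of R M))).obj N,
      algebraMap V R a • x = 0

/-- Almost finitely presented module (w.r.t. an ideal `m ⊆ V`). -/
def IsAlmostFP (V : Type v) [CommRing V] (m : Ideal V)
    (R : Type u) [CommRing R] [Algebra V R]
    (M : Type u) [AddCommGroup M] [Module R M] : Prop :=
  ∀ ε ∈ m, ∀ δ ∈ m, ∃ (n k : ℕ) (ψ : (Fin k → R) →ₗ[R] (Fin n → R))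
    (φ : (Fin n → R) →ₗ[R] M),
      (∀ x : M, algebraMap V R ε • x ∈ LinearMap.range φ) ∧
        (∀ y ∈ LinearMap.ker φ, algebraMap V R δ • y ∈ LinearMap.range ψ)


theorem ext_smul_iff {R : Type u} [CommRing R] {X : ModuleCat.{u} R} (P : ProjectiveResolution X)
    (r : R) (n : ℕ) (Y : ModuleCat.{u} R) :
    (∀ x : ((Ext R (ModuleCat.{u} R) (n+1)).obj (Opposite.op X)).obj Y, r • x = 0) ↔
    ∀ f : P.complex.X (n+1) ⟶ Y, P.complex.d (n+2) (n+1) ≫ f = 0 →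
      ∃ g : P.complex.X n ⟶ Y, P.complex.d (n+1) n ≫ g = r • f := by
  let K := P.complex.linearYonedaObj R Y
  let S := K.sc' n (n+1) (n+2)
  let e : ((Ext R (ModuleCat.{u} R) (n+1)).obj (Opposite.op X)).obj Y ≅
     ModuleCat.of R (LinearMap.ker S.g.hom ⧸ LinearMap.range S.moduleCatToCycles) :=
       P.isoExt (n+1) Y ≪≫
       ShortComplex.homologyMapIso (K.isoSc' n (n+1) (n+2) (by simp) (by simp)) ≪≫
       S.moduleCatHomologyIso
  let e' := e.toLinearEquiv
  have h1 : (∀ x : ((Ext R (ModuleCat.{u} R) (n+1)).obj (Opposite.op X)).obj Y, r • x = 0) ↔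
     ∀ x : (LinearMap.ker S.g.hom ⧸ LinearMap.range S.moduleCatToCycles), r • x = 0 := by
    constructor
    · intro h x
      have := h (e'.symm x)
      rw [← map_smul] at this
      exact (LinearEquiv.map_eq_zero_iff e'.symm).1 this
    · intro h x
      have := h (e' x)
      rw [← map_smul] at this
      exact (LinearEquiv.map_eq_zero_iff e').1 this
  rw [h1]
  constructor
  · intro h f hf
    let z : LinearMap.ker S.g.hom := ⟨f, hf⟩
    have := h (Submodule.Quotient.mk z)
    rw [← Submodule.Quotient.mk_smul, Submodule.Quotient.mk_eq_zero] at this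
    obtain ⟨g, hg⟩ := this
    exact ⟨g, congrArg Subtype.val hg⟩
  · intro h x
    obtain ⟨⟨f, hf⟩, rfl⟩ := Submodule.Quotient.mk_surjective _ x
    obtain ⟨g, hg⟩ := h f hf
    rw [← Submodule.Quotient.mk_smul, Submodule.Quotient.mk_eq_zero]
    exact ⟨g, Subtype.ext hg⟩

/-- Ext-killing implies that `r` factors through a projective. -/
theorem ext_one_factor {R : Type u} [CommRing R] (M : Type u) [AddCommGroup M] [Module R M]
    (r : R)
    (h : ∀ N : ModuleCat.{u} R,
      ∀ x : ((Ext R (ModuleCat.{u} R) 1).obj (Opposite.op (ModuleCat.of R M))).obj N, r • x = 0) :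
    ∃ (L : Type u) (_ : AddCommGroup L) (_ : Module R L) (_ : Module.Projective R L)
      (k : M →ₗ[R] L) (p : L →ₗ[R] M), p ∘ₗ k = r • LinearMap.id := by
  let P := projectiveResolution (ModuleCat.of R M)
  let π : P.complex.X 0 ⟶ ModuleCat.of R M := P.π.f 0
  have hπd : P.complex.d 1 0 ≫ π = 0 := P.complex_d_comp_π_f_zero
  have hex := P.exact₀
  have hepi : Epi π := inferInstanceAs (Epi (P.π.f 0))
  have hsurj : Function.Surjective π.hom := (ModuleCat.epi_iff_surjective _).1 hepi
  have hker : ∀ x, π.hom x = 0 → ∃ y, (P.complex.d 1 0).hom y = x := by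
    intro x hx
    exact (ShortComplex.moduleCat_exact_iff _).1 hex x hx
  let N := ModuleCat.of R (LinearMap.ker π.hom)
  let f : P.complex.X 1 ⟶ N := ModuleCat.ofHom ((P.complex.d 1 0).hom.codRestrict _
    (fun c => by
      have := congrArg (fun t => t.hom c) hπd
      simpa using this))
  have hf : P.complex.d 2 1 ≫ f = 0 := by
    ext x
    have := congrArg (fun t => t.hom x) (P.complex.d_comp_d 2 1 0)
    exact this
  obtain ⟨g, hg⟩ := (ext_smul_iff P r 0 N).1 (h N) f hf
  have hg' : ∀ y, (g.hom ((P.complex.d 1 0).hom y) : P.complex.X 0) =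
      r • (P.complex.d 1 0).hom y := by
    intro y
    have := congrArg (fun t => ((t.hom y : LinearMap.ker π.hom) : P.complex.X 0)) hg
    exact this
  let q : P.complex.X 0 →ₗ[R] P.complex.X 0 := r • LinearMap.id - (LinearMap.ker π.hom).subtype ∘ₗ g.hom
  have hq : LinearMap.ker π.hom ≤ LinearMap.ker q := by
    intro x hx
    obtain ⟨y, rfl⟩ := hker x hx
    simp only [q, LinearMap.mem_ker, LinearMap.sub_apply, LinearMap.smul_apply, LinearMap.id_apply,
      LinearMap.comp_apply, Submodule.subtype_apply]
    rw [hg' y, sub_self]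
  let k : M →ₗ[R] P.complex.X 0 := (LinearMap.ker π.hom).liftQ q hq ∘ₗ
    (π.hom.quotKerEquivOfSurjective hsurj).symm.toLinearMap
  refine ⟨P.complex.X 0, inferInstance, inferInstance, ?_, k, π.hom, ?_⟩
  · exact (IsProjective.iff_projective _).2 (P.projective 0)
  · ext x
    obtain ⟨z, rfl⟩ := hsurj x
    have : (π.hom.quotKerEquivOfSurjective hsurj).symm (π.hom z) =
        Submodule.Quotient.mk z := by
      rw [LinearEquiv.symm_apply_eq]; rfl
    simp only [k, LinearMap.comp_apply, LinearEquiv.coe_coe, this]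
    change π.hom (q z) = _
    simp only [q, LinearMap.sub_apply, LinearMap.smul_apply, LinearMap.id_apply,
      LinearMap.comp_apply, map_sub, map_smul]
    have : π.hom ((LinearMap.ker π.hom).subtype (g.hom z)) = 0 := (g.hom z).2
    rw [this, sub_zero]

theorem ext_kill_of_factor {R : Type u} [CommRing R] (M : Type u) [AddCommGroup M] [Module R M]
    (r : R) (L : Type*) [AddCommGroup L] [Module R L] [Module.Projective R L]
      (k : M →ₗ[R] L) (p : L →ₗ[R] M) (hk : p ∘ₗ k = r • LinearMap.id) (n : ℕ)
      (N : ModuleCat.{u} R)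
      (x : ((Ext R (ModuleCat.{u} R) (n+1)).obj (Opposite.op (ModuleCat.of R M))).obj N) :
      r • x = 0 := by
  let P := projectiveResolution (ModuleCat.of R M)
  let π : P.complex.X 0 ⟶ ModuleCat.of R M := P.π.f 0
  have hπd : P.complex.d 1 0 ≫ π = 0 := P.complex_d_comp_π_f_zero
  have hepi : Epi π := inferInstanceAs (Epi (P.π.f 0))
  have hsurj : Function.Surjective π.hom := (ModuleCat.epi_iff_surjective _).1 hepi
  obtain ⟨p', hp'⟩ := Module.projective_lifting_property π.hom p hsurj
  let h : ModuleCat.of R M ⟶ P.complex.X 0 := ModuleCat.ofHom (p' ∘ₗ k)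
  have hh : h ≫ π = r • 𝟙 _ := by
    apply ModuleCat.hom_ext
    change π.hom ∘ₗ (p' ∘ₗ k) = _
    rw [← LinearMap.comp_assoc, hp', hk]
    rfl
  have key : ∀ n, ∃ s : P.complex.X n ⟶ P.complex.X (n+1),
      P.complex.d (n+1) n ≫ s ≫ P.complex.d (n+1) n = r • P.complex.d (n+1) n := by
    intro n
    induction n with
    | zero =>
      have h0 : (r • 𝟙 _ - π ≫ h) ≫ π = 0 := by
        rw [Preadditive.sub_comp, Category.assoc, hh]
        simp
      refine ⟨P.exact₀.liftFromProjective _ h0, ?_⟩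
      have := P.exact₀.liftFromProjective_comp _ h0
      dsimp at this ⊢
      rw [this, Preadditive.comp_sub, ← Category.assoc _ π h, hπd]
      simp
    | succ n ih =>
      obtain ⟨s, hs⟩ := ih
      have h0 : (r • 𝟙 _ - P.complex.d (n+1) n ≫ s) ≫ P.complex.d (n+1) n = 0 := by
        rw [Preadditive.sub_comp, Category.assoc, hs]
        simp
      refine ⟨(P.exact_succ n).liftFromProjective _ h0, ?_⟩
      have := (P.exact_succ n).liftFromProjective_comp _ h0
      dsimp at this ⊢
      rw [this, Preadditive.comp_sub]
      simp
  revert x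
  rw [ext_smul_iff P r n N]
  intro f hf
  obtain ⟨s, hs⟩ := key n
  refine ⟨s ≫ f, ?_⟩
  have h0 : (r • 𝟙 _ - P.complex.d (n+1) n ≫ s) ≫ P.complex.d (n+1) n = 0 := by
    rw [Preadditive.sub_comp, Category.assoc, hs]
    simp
  have := (P.exact_succ n).liftFromProjective_comp _ h0
  have h2 : (r • 𝟙 _ - P.complex.d (n+1) n ≫ s) ≫ f = 0 := by
    rw [← this, Category.assoc]
    dsimp
    rw [hf]
    simp
  rw [Preadditive.sub_comp, sub_eq_zero] at h2
  simpa using h2.symm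


theorem exists_lift_of_mem_range {S B M M' : Type*} [CommRing S] [AddCommGroup B] [Module S B]
    [AddCommGroup M] [Module S M] [AddCommGroup M'] [Module S M'] [Module.Projective S B]
    (k : M' →ₗ[S] M) (f : B →ₗ[S] M) (h : ∀ x, f x ∈ LinearMap.range k) :
    ∃ g : B →ₗ[S] M', k ∘ₗ g = f := by
  obtain ⟨g, hg⟩ := Module.projective_lifting_property k.rangeRestrict (f.codRestrict _ h)
    k.surjective_rangeRestrict
  refine ⟨g, ?_⟩
  ext x
  exact congrArg Subtype.val (LinearMap.congr_fun hg x)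

theorem map_smul_top_le {R M N : Type*} [CommRing R] [AddCommGroup M] [Module R M]
    [AddCommGroup N] [Module R N] (I J : Ideal R) (F : M →ₗ[R] N)
    (hF : ∀ x, F x ∈ J • (⊤ : Submodule R N)) (x : M) (hx : x ∈ I • (⊤ : Submodule R M)) :
    F x ∈ (I * J) • (⊤ : Submodule R N) := by
  have h1 : Submodule.map F (I • ⊤) ≤ (I * J) • (⊤ : Submodule R N) := by
    rw [Submodule.map_smul'', Submodule.mul_smul]
    apply Submodule.smul_mono le_rfl
    rintro _ ⟨y, -, rfl⟩
    exact hF y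
  exact h1 ⟨x, hx, rfl⟩

theorem pow_mem_smul_top {R M : Type*} [CommRing R] [AddCommGroup M] [Module R M]
    (I : Ideal R) (F : M →ₗ[R] M)
    (hF : ∀ x, F x ∈ I • (⊤ : Submodule R M)) (n : ℕ) (x : M) :
    (F ^ n) x ∈ (I ^ n) • (⊤ : Submodule R M) := by
  induction n with
  | zero => simp
  | succ n ih =>
    rw [pow_succ' F, Module.End.mul_apply, pow_succ I]
    exact map_smul_top_le _ _ F hF _ ih

/-- Projective modules lift along nilpotent surjections. -/
theorem exists_projective_lift {R : Type*} [CommRing R] {I : Ideal R} (hnil : ∃ k : ℕ, I ^ k = ⊥)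
    {S : Type*} [CommRing S] [Algebra R S] (hsurj : Function.Surjective (algebraMap R S))
    (hker : RingHom.ker (algebraMap R S) = I)
    (A : Type*) [AddCommGroup A] [Module S A] [Module R A] [IsScalarTower R S A]
    [Module.Projective S A] :
    ∃ (L : Submodule R (A →₀ R)), Module.Projective R L ∧ ∃ q : L →ₗ[R] A,
      Function.Surjective q ∧ ∀ x, q x = 0 → x ∈ I • (⊤ : Submodule R L) := by
  obtain ⟨k, hk⟩ := hnil
  obtain ⟨s, hs⟩ := (Module.projective_def (R := S) (P := A)).1 inferInstance
  let q : (A →₀ R) →ₗ[R] (A →₀ S) := Finsupp.mapRange.linearMap (Algebra.linearMap R S)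
  have hqs : Function.Surjective q := by
    intro y
    exact Finsupp.mapRange_surjective _ (map_zero _) hsurj y
  have hq0 : ∀ x, q x = 0 → x ∈ I • (⊤ : Submodule R (A →₀ R)) := by
    intro x hx
    rw [← Finsupp.sum_single x]
    refine Submodule.sum_mem _ fun a _ => ?_
    have : x a ∈ I := by
      rw [← hker]
      exact DFunLike.congr_fun hx a
    have h2 : Finsupp.single a (x a) = x a • Finsupp.single a (1 : R) := by simp
    rw [h2]
    exact Submodule.smul_mem_smul this trivial
  have hq1 : ∀ i ∈ I, ∀ a : A, i • a = 0 := by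
    intro i hi a
    rw [← hker] at hi
    rw [← one_smul S a, ← smul_assoc, Algebra.smul_def, (show algebraMap R S i = 0 from hi)]
    simp
  let p : (A →₀ S) →ₗ[S] A := Finsupp.linearCombination S id
  let e : Module.End R (A →₀ S) := (s ∘ₗ p).restrictScalars R
  have hps : ∀ a, p (s a) = a := hs
  have he : e * e = e := by
    refine LinearMap.ext fun x => ?_
    simp [e, hps]
  obtain ⟨E, hE⟩ : ∃ E : Module.End R (A →₀ R), q ∘ₗ E = e ∘ₗ q := Module.projective_lifting_property q (e ∘ₗ q) hqs
  have hpow : ∀ (E : Module.End R (A →₀ R)) (e : Module.End R (A →₀ S)), q ∘ₗ E = e ∘ₗ q →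
      ∀ n : ℕ, q ∘ₗ (E ^ n) = (e ^ n) ∘ₗ q := by
    intro E e h n
    exact (Module.End.commute_pow_left_of_commute h.symm n).symm
  have hn : ((E : Module.End R (A →₀ R)) - E ^ 2) ^ (k+1) = 0 := by
    refine LinearMap.ext fun x => ?_
    have := pow_mem_smul_top I ((E : Module.End R (A →₀ R)) - E ^ 2) (fun x => hq0 _ (by
      have h2 := LinearMap.congr_fun (hpow E e hE 2) x
      have h1 := LinearMap.congr_fun hE x
      simp only [LinearMap.comp_apply] at h1 h2
      rw [LinearMap.sub_apply, map_sub, h1, h2, pow_two, he, sub_self])) (k+1) x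
    rw [pow_succ I, hk] at this
    simpa using this
  let E' : Module.End R (A →₀ R) := 1 - (1 - E ^ (k+1)) ^ (k+1)
  have hid : E' * E' = E' := isIdempotentElem_one_sub_one_sub_pow_pow (R := Module.End R (A →₀ R)) E _ hn
  have hide : IsIdempotentElem (e : Module.End R (A →₀ S)) := he
  have hqE : q ∘ₗ E' = e ∘ₗ q := by
    have h1 := hpow E e hE (k+1)
    rw [hide.pow_succ_eq] at h1
    have h2 := hpow (1 - E^(k+1)) (1 - e) (by
      rw [LinearMap.comp_sub, h1]; ext x; simp) (k+1)
    have h3 : (1 - (e : Module.End R (A →₀ S))) ^ (k+1) = 1 - e :=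
      IsIdempotentElem.pow_succ_eq k
        (IsIdempotentElem.one_sub (R := Module.End R (A →₀ S)) (a := e) hide)
    rw [h3] at h2
    simp only [E']
    rw [LinearMap.comp_sub, h2]
    ext x; simp
  have hqE' : ∀ x, q (E' x) = e (q x) := LinearMap.congr_fun hqE
  refine ⟨LinearMap.range E', ?_, (p.restrictScalars R ∘ₗ q) ∘ₗ (LinearMap.range E').subtype,
    ?_, ?_⟩
  · refine Module.Projective.of_split (M := (A →₀ R)) (LinearMap.range E').subtype E'.rangeRestrict ?_
    refine LinearMap.ext fun ⟨x, y, hy⟩ => ?_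
    subst hy
    apply Subtype.ext
    exact LinearMap.congr_fun hid y
  · intro a
    obtain ⟨y, hy⟩ := hqs (s a)
    refine ⟨⟨E' y, y, rfl⟩, ?_⟩
    simp [hqE', hy, e, hps]
  · rintro ⟨x, y, rfl⟩ hx
    have h1 : p (q (E' y)) = 0 := hx
    have h2 : q (E' y) = 0 := by
      have : E' y = E' (E' y) := (LinearMap.congr_fun hid y).symm
      rw [this, hqE']
      simp [e, h1]
    have h3 := hq0 _ h2
    have h4 := map_smul_top_le (N := LinearMap.range E') I ⊤ E'.rangeRestrict (by simp) _ h3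
    rw [Ideal.mul_top] at h4
    convert h4 using 1
    apply Subtype.ext
    exact (LinearMap.congr_fun hid y).symm


/-- Elementary form of almost projectivity. -/
def FactFree {R : Type*} [CommRing R] (J : Ideal R) (P : Type*) [AddCommGroup P] [Module R P] :
    Prop :=
  ∀ a ∈ J, ∃ k : P →ₗ[R] (P →₀ R), Finsupp.linearCombination R id ∘ₗ k = a • LinearMap.id

theorem linComb_surj (R P : Type*) [CommRing R] [AddCommGroup P] [Module R P] :
    Function.Surjective (Finsupp.linearCombination R (id : P → P)) := fun x =>
  ⟨Finsupp.single x 1, by simp⟩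

theorem factFree_of_proj {R P L : Type*} [CommRing R] [AddCommGroup P] [Module R P]
    [AddCommGroup L] [Module R L] [Module.Projective R L] (a : R) (k : P →ₗ[R] L)
    (p : L →ₗ[R] P) (h : p ∘ₗ k = a • LinearMap.id) :
    ∃ k : P →ₗ[R] (P →₀ R), Finsupp.linearCombination R id ∘ₗ k = a • LinearMap.id := by
  obtain ⟨p', hp'⟩ := Module.projective_lifting_property
    (Finsupp.linearCombination R (id : P → P)) p (linComb_surj R P)
  exact ⟨p' ∘ₗ k, by rw [← LinearMap.comp_assoc, hp', h]⟩

theorem factFree_of_mul {R P : Type*} [CommRing R] [AddCommGroup P] [Module R P] {J : Ideal R}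
    (hJ : J * J = J)
    (h : ∀ a ∈ J, ∀ b ∈ J, ∃ k : P →ₗ[R] (P →₀ R),
      Finsupp.linearCombination R id ∘ₗ k = (a * b) • LinearMap.id) : FactFree J P := by
  intro a ha
  rw [← hJ] at ha
  refine Submodule.mul_induction_on ha h ?_
  rintro x y ⟨k, hk⟩ ⟨l, hl⟩
  exact ⟨k + l, by rw [LinearMap.comp_add, hk, hl, add_smul]⟩

theorem nil_smul_top_le {R P : Type*} [CommRing R] [AddCommGroup P] [Module R P] {J I : Ideal R}
    (hJ : J * J = J) (hnil : ∃ k : ℕ, I ^ k = ⊥) (N : Submodule R P)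
    (h : J • (⊤ : Submodule R P) ≤ N ⊔ I • ⊤) : J • (⊤ : Submodule R P) ≤ N := by
  have key : ∀ n : ℕ, J • (⊤ : Submodule R P) ≤ N ⊔ (I ^ (n+1)) • ⊤ := by
    intro n
    induction n with
    | zero => simpa using h
    | succ n ih =>
      rw [← hJ, Submodule.mul_smul]
      refine (Submodule.smul_mono le_rfl ih).trans ?_
      rw [Submodule.smul_sup, ← Submodule.mul_smul, mul_comm, Submodule.mul_smul]
      refine sup_le (Submodule.smul_le_right.trans le_sup_left) ?_
      refine (Submodule.smul_mono le_rfl h).trans ?_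
      rw [Submodule.smul_sup, ← Submodule.mul_smul, ← pow_succ]
      exact sup_le_sup_right Submodule.smul_le_right _
  obtain ⟨k, hk⟩ := hnil
  have := key k
  rw [pow_succ, hk] at this
  simpa using this

/-- Shrinking the universe. -/
theorem exists_small {R : Type u} [CommRing R] {J I : Ideal R}
    (hJ : J * J = J) (hnil : ∃ k : ℕ, I ^ k = ⊥)
    (P' : Type u) [AddCommGroup P'] [Module R P']
    (P : Type*) [AddCommGroup P] [Module R P] (hP : FactFree J P)
    (σ : P →ₗ[R] P')
    (hker : ∀ a ∈ J, ∀ x, σ x = 0 → a • x ∈ I • (⊤ : Submodule R P))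
    (hran : ∀ a ∈ J, ∀ y, a • y ∈ LinearMap.range σ) :
    ∃ (P : Type u) (_ : AddCommGroup P) (_ : Module R P), FactFree J P ∧
      ∃ σ : P →ₗ[R] P', (∀ a ∈ J, ∀ x, σ x = 0 → a • x ∈ I • (⊤ : Submodule R P)) ∧
        (∀ a ∈ J, ∀ y, a • y ∈ LinearMap.range σ) := by
  classical
  have hc : ∀ y : P', ∃ x : P, y ∈ LinearMap.range σ → σ x = y := by
    intro y
    by_cases hy : y ∈ LinearMap.range σ
    · obtain ⟨x, hx⟩ := hy
      exact ⟨x, fun _ => hx⟩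
    · exact ⟨0, fun h => absurd h hy⟩
  choose c hc using hc
  let l : (P' →₀ R) →ₗ[R] P := Finsupp.linearCombination R c
  let j : ((P' →₀ R) ⧸ LinearMap.ker l) →ₗ[R] P := (LinearMap.ker l).liftQ l le_rfl
  have hj : Function.Injective j := by
    rw [← LinearMap.ker_eq_bot]
    exact Submodule.ker_liftQ_eq_bot _ _ _ le_rfl
  have hjc : ∀ y, c y ∈ LinearMap.range j := fun y =>
    ⟨Submodule.Quotient.mk (Finsupp.single y 1), by simp [j, l]⟩
  have hJr : J • (⊤ : Submodule R P) ≤ LinearMap.range j := by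
    apply nil_smul_top_le hJ hnil
    rw [Submodule.smul_le]
    intro a ha x _
    have h1 : σ (x - c (σ x)) = 0 := by
      rw [map_sub, hc _ ⟨x, rfl⟩, sub_self]
    have h2 := hker a ha _ h1
    have h3 : a • x = a • c (σ x) + a • (x - c (σ x)) := by rw [← smul_add]; simp
    rw [h3]
    exact Submodule.add_mem_sup (Submodule.smul_mem _ _ (hjc _)) h2
  have hJr' : ∀ a ∈ J, ∀ x : P, a • x ∈ LinearMap.range j := fun a ha x =>
    hJr (Submodule.smul_mem_smul ha trivial)
  refine ⟨(P' →₀ R) ⧸ LinearMap.ker l, inferInstance, inferInstance, ?_, σ ∘ₗ j, ?_, ?_⟩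
  · apply factFree_of_mul hJ
    intro a ha b hb
    obtain ⟨k, hk⟩ := hP a ha
    obtain ⟨p, hp⟩ := exists_lift_of_mem_range j (b • Finsupp.linearCombination R (id : P → P))
      (fun x => hJr' b hb _)
    refine factFree_of_proj _ (k ∘ₗ j) p ?_
    refine LinearMap.ext fun x => hj ?_
    have h1 := LinearMap.congr_fun hp (k (j x))
    have h2 := LinearMap.congr_fun hk (j x)
    simp only [LinearMap.comp_apply, LinearMap.smul_apply, LinearMap.id_apply, map_smul] at h1 h2 ⊢
    rw [h1, h2, smul_smul, mul_comm]
  · intro a ha x hx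
    rw [← hJ] at ha
    refine Submodule.mul_induction_on ha ?_ ?_
    · intro b hb c hc
      have h1 := hker c hc (j x) hx
      have h2 : b • c • j x ∈ Submodule.map j (I • ⊤) := by
        rw [Submodule.map_smul'', Submodule.map_top]
        have h3 : b • c • j x ∈ J • I • (⊤ : Submodule R P) := Submodule.smul_mem_smul hb h1
        rw [← Submodule.mul_smul, mul_comm, Submodule.mul_smul] at h3
        exact Submodule.smul_mono le_rfl hJr h3
      obtain ⟨z, hz, hz'⟩ := h2
      rw [← map_smul, ← map_smul] at hz'
      rw [mul_smul, ← hj hz']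
      exact hz
    · intro b c hb hc
      rw [add_smul]
      exact add_mem hb hc
  · intro a ha y
    rw [← hJ] at ha
    refine Submodule.mul_induction_on ha ?_ ?_
    · intro b hb c hc
      obtain ⟨x, hx⟩ := hran c hc y
      obtain ⟨z, hz⟩ := hJr' b hb x
      exact ⟨z, by rw [LinearMap.comp_apply, hz, map_smul, hx, mul_smul]⟩
    · intro b c hb hc
      rw [add_smul]
      exact add_mem hb hc

theorem exists_fg_lift {R P P' : Type*} [CommRing R] [AddCommGroup P] [Module R P]
    [AddCommGroup P'] [Module R P'] (σ : P →ₗ[R] P') (N : Submodule R P') (hN : N.FG)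
    (h : N ≤ LinearMap.range σ) : ∃ M : Submodule R P, M.FG ∧ M.map σ = N := by
  obtain ⟨t, rfl⟩ := hN
  have : ∀ y : t, ∃ x, σ x = y := fun y => h (Submodule.subset_span y.2)
  choose g hg using this
  refine ⟨Submodule.span R (Set.range g), Submodule.fg_span (Set.finite_range g), ?_⟩
  rw [Submodule.map_span]
  congr 1
  ext y
  constructor
  · rintro ⟨_, ⟨z, rfl⟩, rfl⟩
    rw [hg]; exact z.2
  · intro hy
    exact ⟨_, ⟨⟨y, hy⟩, rfl⟩, hg ⟨y, hy⟩⟩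

/-- Almost finite generation lifts, and almost f.g. + almost projective gives almost f.p. -/
theorem almostFP_of {R : Type*} [CommRing R] {J I : Ideal R}
    (hJ : J * J = J) (hnil : ∃ k : ℕ, I ^ k = ⊥)
    (P' : Type*) [AddCommGroup P'] [Module R P']
    (P : Type*) [AddCommGroup P] [Module R P] (hP : FactFree J P)
    (σ : P →ₗ[R] P')
    (hker : ∀ a ∈ J, ∀ x, σ x = 0 → a • x ∈ I • (⊤ : Submodule R P))
    (hran : ∀ a ∈ J, ∀ y, a • y ∈ LinearMap.range σ)
    (hfg : ∀ a ∈ J, ∃ N : Submodule R P', N.FG ∧ ∀ y, a • y ∈ N) :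
    ∀ ε ∈ J, ∀ δ ∈ J, ∃ (n : ℕ) (ψ : (Fin n → R) →ₗ[R] (Fin n → R))
    (φ : (Fin n → R) →ₗ[R] P),
      (∀ x : P, ε • x ∈ LinearMap.range φ) ∧
        (∀ y ∈ LinearMap.ker φ, δ • y ∈ LinearMap.range ψ) := by
  have hadd : ∀ K : Submodule R P, ∀ a b : R,
      (∃ N : Submodule R P, N.FG ∧ ∀ x, a • x ∈ N ⊔ K) →
      (∃ N : Submodule R P, N.FG ∧ ∀ x, b • x ∈ N ⊔ K) →
      (∃ N : Submodule R P, N.FG ∧ ∀ x, (a + b) • x ∈ N ⊔ K) := by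
    rintro K a b ⟨N, hN, h⟩ ⟨N', hN', h'⟩
    refine ⟨N ⊔ N', hN.sup hN', fun x => ?_⟩
    rw [add_smul]
    exact add_mem (sup_le_sup_right le_sup_left K (h x)) (sup_le_sup_right le_sup_right K (h' x))
  have h1 : ∀ a ∈ J, ∃ N : Submodule R P, N.FG ∧ ∀ x, a • x ∈ N ⊔ I • ⊤ := by
    intro a ha
    rw [← hJ] at ha
    refine Submodule.mul_induction_on ha ?_ (hadd _)
    intro c hc d hd
    rw [← hJ] at hd
    refine Submodule.mul_induction_on hd ?_ ?_
    · intro a ha b hb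
      obtain ⟨N', hN', h'⟩ := hfg a ha
      obtain ⟨N, hN, h⟩ := exists_fg_lift σ (N'.map (b • LinearMap.id)) (hN'.map _) (by
        rintro _ ⟨y, -, rfl⟩
        exact hran b hb y)
      refine ⟨N, hN, fun x => ?_⟩
      have h2 : b • a • σ x ∈ N.map σ := by
        rw [h]
        exact ⟨_, h' _, rfl⟩
      obtain ⟨z, hz, hz'⟩ := h2
      have h3 := hker c hc (b • a • x - z) (by
        rw [map_sub, hz', map_smul, map_smul, sub_self])
      have h4 : (c * (a * b)) • x = c • z + c • (b • a • x - z) := by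
        rw [← smul_add]; simp only [add_sub_cancel, smul_smul]; congr 1; ring
      rw [h4]
      exact Submodule.add_mem_sup (Submodule.smul_mem _ _ hz) h3
    · intro x y hx hy
      rw [mul_add]
      exact hadd _ _ _ hx hy
  have hn : ∀ n : ℕ, ∀ a ∈ J, ∃ N : Submodule R P, N.FG ∧ ∀ x, a • x ∈ N ⊔ (I ^ (n+1)) • ⊤ := by
    intro n
    induction n with
    | zero => simpa using h1
    | succ n ih =>
      intro a ha
      rw [← hJ] at ha
      refine Submodule.mul_induction_on ha ?_ (hadd _)
      intro b hb c hc
      obtain ⟨N, hN, h⟩ := ih c hc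
      obtain ⟨N', hN', h'⟩ := h1 b hb
      refine ⟨N ⊔ N', hN.sup hN', fun x => ?_⟩
      obtain ⟨y, hy, z, hz, hyz⟩ := Submodule.mem_sup.1 (h x)
      rw [mul_smul, ← hyz, smul_add]
      refine add_mem (Submodule.mem_sup_left (Submodule.mem_sup_left (Submodule.smul_mem _ _ hy))) ?_
      have h5 : b • z ∈ (I ^ (n+1)) • (Submodule.map (b • LinearMap.id) (⊤ : Submodule R P)) := by
        rw [← Submodule.map_smul'']
        exact ⟨z, hz, rfl⟩
      have h6 : (I ^ (n+1)) • (Submodule.map (b • LinearMap.id) (⊤ : Submodule R P)) ≤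
          (I ^ (n+1)) • (N' ⊔ I • ⊤) := by
        apply Submodule.smul_mono le_rfl
        rintro _ ⟨w, -, rfl⟩
        exact h' w
      have h7 := h6 h5
      rw [Submodule.smul_sup, ← Submodule.mul_smul, ← pow_succ] at h7
      have h8 : (I ^ (n+1)) • N' ≤ N ⊔ N' := Submodule.smul_le_right.trans le_sup_right
      have h9 : (I ^ (n+1)) • N' ⊔ (I ^ (n+1+1)) • ⊤ ≤ N ⊔ N' ⊔ (I ^ (n+1+1)) • ⊤ :=
        sup_le_sup_right h8 _
      exact h9 h7
  have hF : ∀ a ∈ J, ∃ N : Submodule R P, N.FG ∧ ∀ x, a • x ∈ N := by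
    obtain ⟨k, hk⟩ := hnil
    intro a ha
    have := hn k a ha
    rw [pow_succ, hk] at this
    simpa using this
  have hD : ∀ d ∈ J, ∃ N : Submodule R P, N.FG ∧ ∀ (n : ℕ) (φ : (Fin n → R) →ₗ[R] P),
      N ≤ LinearMap.range φ → ∃ g : P →ₗ[R] (Fin n → R), φ ∘ₗ g = d • LinearMap.id := by
    intro d hd
    rw [← hJ] at hd
    refine Submodule.mul_induction_on hd ?_ ?_
    · intro a ha b hb
      obtain ⟨N, hN, h⟩ := hF a ha
      refine ⟨N, hN, fun n φ hφ => ?_⟩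
      obtain ⟨k, hk⟩ := hP b hb
      obtain ⟨g, hg⟩ := exists_lift_of_mem_range φ
        (a • Finsupp.linearCombination R (id : P → P)) (fun x => hφ (h _))
      refine ⟨g ∘ₗ k, ?_⟩
      rw [← LinearMap.comp_assoc, hg, LinearMap.smul_comp, hk, smul_smul]
    · rintro a b ⟨N, hN, h⟩ ⟨N', hN', h'⟩
      refine ⟨N ⊔ N', hN.sup hN', fun n φ hφ => ?_⟩
      obtain ⟨g, hg⟩ := h n φ (le_sup_left.trans hφ)
      obtain ⟨g', hg'⟩ := h' n φ (le_sup_right.trans hφ)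
      exact ⟨g + g', by rw [LinearMap.comp_add, hg, hg', add_smul]⟩
  intro ε hε δ hδ
  obtain ⟨N, hN, h⟩ := hF ε hε
  obtain ⟨N', hN', h'⟩ := hD δ hδ
  obtain ⟨n, s, hs⟩ := Submodule.fg_iff_exists_fin_generating_family.1 (hN.sup hN')
  let φ : (Fin n → R) →ₗ[R] P := Fintype.linearCombination R s
  have hφ : LinearMap.range φ = N ⊔ N' := by
    rw [← hs]
    exact Fintype.range_linearCombination R s
  obtain ⟨g, hg⟩ := h' n φ (hφ ▸ le_sup_right)
  refine ⟨n, δ • LinearMap.id - g ∘ₗ φ, φ, fun x => ?_, fun y hy => ⟨y, ?_⟩⟩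
  · rw [hφ]
    exact Submodule.mem_sup_left (h x)
  · have : φ y = 0 := hy
    simp [this]


open TensorProduct in
/-- The pushout module. -/
abbrev PushoutMod {S A1 A0 K F : Type*} [CommRing S] [AddCommGroup A1] [Module S A1]
    [AddCommGroup A0] [Module S A0] [AddCommGroup K] [Module S K] [AddCommGroup F] [Module S F]
    (ι : A1 →ₗ[S] A0) (i : K →ₗ[S] F) : Type _ :=
  ((A1 ⊗[S] F) × (A0 ⊗[S] K)) ⧸
    LinearMap.range ((i.lTensor A1).prod (-(ι.rTensor K)))

theorem smul_mem_of_span_top {S M N : Type*} [CommRing S] [AddCommGroup M] [Module S M]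
    [AddCommGroup N] [Module S N] (n : Ideal S) (f : M →ₗ[S] N) (T : Submodule S N)
    (hT : ∀ a ∈ n, ∀ y, a • y ∈ T) (x : M) (hx : x ∈ n • (⊤ : Submodule S M)) : f x ∈ T := by
  have h1 := map_smul_top_le n ⊤ f (by simp) x hx
  rw [Ideal.mul_top] at h1
  have h2 : n • (⊤ : Submodule S N) ≤ T := Submodule.smul_le.2 fun a ha y _ => hT a ha y
  exact h2 h1

open TensorProduct in
theorem pushout_lift {S A1 A0 K F E : Type*} [CommRing S] [AddCommGroup E] [Module S E] [AddCommGroup A1] [Module S A1]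
    [AddCommGroup A0] [Module S A0] [AddCommGroup K] [Module S K] [AddCommGroup F] [Module S F]
    [Module.Projective S A1] [Module.Projective S A0] [Module.Projective S F]
    (n : Ideal S)
    (ι : A1 →ₗ[S] A0) (i : K →ₗ[S] F)
    (hr : ∀ a ∈ n, ∃ r : F →ₗ[S] K, r ∘ₗ i = a • LinearMap.id)
    (G : A0 →ₗ[S] A1) (hG1 : ∀ x, G (ι x) - x ∈ n • (⊤ : Submodule S A1))
    (hG0 : ∀ x, ι (G x) - x ∈ n • (⊤ : Submodule S A0)) :
    ∀ (g : E →ₗ[S] PushoutMod ι i), Function.Surjective g →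
      ∃ h : PushoutMod ι i →ₗ[S] E, g ∘ₗ h = LinearMap.id := by
  intro g hg
  let W := LinearMap.range ((i.lTensor A1).prod (-(ι.rTensor K)))
  let j1 : A1 ⊗[S] F →ₗ[S] PushoutMod ι i := W.mkQ ∘ₗ LinearMap.inl _ _ _
  let j0 : A0 ⊗[S] K →ₗ[S] PushoutMod ι i := W.mkQ ∘ₗ LinearMap.inr _ _ _
  have hj : ∀ x k, j1 (x ⊗ₜ i k) = j0 (ι x ⊗ₜ k) := by
    intro x k
    apply (Submodule.Quotient.eq W).2
    exact ⟨x ⊗ₜ k, by simp⟩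
  -- first lifts
  obtain ⟨u, hu⟩ : ∃ u : A1 →ₗ[S] (F →ₗ[S] E), g.compRight S ∘ₗ u = TensorProduct.curry j1 := by
    apply exists_lift_of_mem_range
    intro x
    obtain ⟨l, hl⟩ := Module.projective_lifting_property g (TensorProduct.curry j1 x) hg
    exact ⟨l, hl⟩
  have hT : ∀ a ∈ n, ∀ f : K →ₗ[S] PushoutMod ι i,
      a • f ∈ LinearMap.range (g.compRight S (M := K)) := by
    intro a ha f
    obtain ⟨r, hr⟩ := hr a ha
    obtain ⟨l, hl⟩ := Module.projective_lifting_property g (f ∘ₗ r) hg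
    refine ⟨l ∘ₗ i, ?_⟩
    change g ∘ₗ (l ∘ₗ i) = _
    rw [← LinearMap.comp_assoc, hl, LinearMap.comp_assoc, hr]
    ext x; simp
  obtain ⟨w, hw⟩ : ∃ w : A0 →ₗ[S] (K →ₗ[S] E), g.compRight S ∘ₗ w = TensorProduct.curry j0 := by
    apply exists_lift_of_mem_range
    intro z
    have h1 := smul_mem_of_span_top n (TensorProduct.curry j0) _ hT _ (hG0 z)
    have h2 : TensorProduct.curry j0 (ι (G z)) ∈ LinearMap.range (g.compRight S (M := K)) := by
      refine ⟨u (G z) ∘ₗ i, ?_⟩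
      ext k
      have := LinearMap.congr_fun (LinearMap.congr_fun hu (G z)) (i k)
      exact this.trans (hj _ _)
    rw [map_sub] at h1
    have := sub_mem h2 h1
    simpa using this
  have hu' : ∀ x f, g (u x f) = j1 (x ⊗ₜ f) := fun x f =>
    LinearMap.congr_fun (LinearMap.congr_fun hu x) f
  have hw' : ∀ x f, g (w x f) = j0 (x ⊗ₜ f) := fun x f =>
    LinearMap.congr_fun (LinearMap.congr_fun hw x) f
  -- the difference
  let N := LinearMap.ker g
  let sub : (K →ₗ[S] N) →ₗ[S] (K →ₗ[S] E) := N.subtype.compRight S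
  let res : (F →ₗ[S] E) →ₗ[S] (K →ₗ[S] E) := LinearMap.lcomp S E i
  let resN : (F →ₗ[S] N) →ₗ[S] (K →ₗ[S] N) := LinearMap.lcomp S N i
  obtain ⟨δ, hδ⟩ : ∃ δ : A1 →ₗ[S] (K →ₗ[S] N), sub ∘ₗ δ = w ∘ₗ ι - res ∘ₗ u := by
    apply exists_lift_of_mem_range
    intro x
    refine ⟨LinearMap.codRestrict N ((w ∘ₗ ι - res ∘ₗ u) x) ?_, ?_⟩
    · intro k
      change g (w (ι x) k - u x (i k)) = 0
      rw [map_sub, hw', hu', hj, sub_self]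
    · ext k; rfl
  have hTN : ∀ a ∈ n, ∀ f : K →ₗ[S] N, a • f ∈ LinearMap.range resN := by
    intro a ha f
    obtain ⟨r, hr⟩ := hr a ha
    refine ⟨f ∘ₗ r, ?_⟩
    change (f ∘ₗ r) ∘ₗ i = _
    rw [LinearMap.comp_assoc, hr]
    ext x; simp
  let v : A0 →ₗ[S] (K →ₗ[S] N) := δ ∘ₗ G
  obtain ⟨y, hy⟩ : ∃ y : A1 →ₗ[S] (F →ₗ[S] N), resN ∘ₗ y = v ∘ₗ ι - δ := by
    apply exists_lift_of_mem_range
    intro x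
    have h1 := smul_mem_of_span_top n δ _ hTN _ (hG1 x)
    rw [map_sub] at h1
    exact h1
  let w' : A0 →ₗ[S] (K →ₗ[S] E) := w - sub ∘ₗ v
  let u' : A1 →ₗ[S] (F →ₗ[S] E) := u - N.subtype.compRight S ∘ₗ y
  have hcomp : ∀ x k, w' (ι x) k = u' x (i k) := by
    intro x k
    have e1 : ((δ x k : N) : E) = w (ι x) k - u x (i k) :=
      LinearMap.congr_fun (LinearMap.congr_fun hδ x) k
    have e2 : ((y x (i k) : N) : E) = v (ι x) k - δ x k :=
      congrArg Subtype.val (LinearMap.congr_fun (LinearMap.congr_fun hy x) k)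
    change w (ι x) k - ((v (ι x) k : N) : E) = u x (i k) - ((y x (i k) : N) : E)
    rw [e2, e1]
    abel
  let s0 : (A1 ⊗[S] F) × (A0 ⊗[S] K) →ₗ[S] E :=
    LinearMap.coprod (TensorProduct.lift u') (TensorProduct.lift w')
  have hs0 : W ≤ LinearMap.ker s0 := by
    rw [LinearMap.range_le_ker_iff]
    ext x k
    simp [s0, hcomp]
  refine ⟨W.liftQ s0 hs0, ?_⟩
  have hN : ∀ z : N, g z = 0 := fun z => z.2
  apply Submodule.linearMap_qext
  apply LinearMap.prod_ext
  · apply TensorProduct.ext'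
    intro x f
    change g (s0 (x ⊗ₜ f, 0)) = j1 (x ⊗ₜ f)
    rw [← hu']
    simp only [s0, LinearMap.coprod_apply, map_zero, add_zero, TensorProduct.lift.tmul]
    change g (u x f - ((y x f : N) : E)) = _
    rw [map_sub, hN, sub_zero]
  · apply TensorProduct.ext'
    intro x f
    change g (s0 (0, x ⊗ₜ f)) = j0 (x ⊗ₜ f)
    rw [← hw']
    simp only [s0, LinearMap.coprod_apply, map_zero, zero_add, TensorProduct.lift.tmul]
    change g (w x f - ((v x f : N) : E)) = _
    rw [map_sub, hN, sub_zero]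

theorem pushout_projective {S A1 A0 K F : Type*} [CommRing S] [AddCommGroup A1] [Module S A1]
    [AddCommGroup A0] [Module S A0] [AddCommGroup K] [Module S K] [AddCommGroup F] [Module S F]
    [Module.Projective S A1] [Module.Projective S A0] [Module.Projective S F]
    (n : Ideal S)
    (ι : A1 →ₗ[S] A0) (i : K →ₗ[S] F)
    (hr : ∀ a ∈ n, ∃ r : F →ₗ[S] K, r ∘ₗ i = a • LinearMap.id)
    (G : A0 →ₗ[S] A1) (hG1 : ∀ x, G (ι x) - x ∈ n • (⊤ : Submodule S A1))
    (hG0 : ∀ x, ι (G x) - x ∈ n • (⊤ : Submodule S A0)) :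
    Module.Projective S (PushoutMod ι i) := by
  apply Module.Projective.of_lifting_property''
  intro g hg
  exact pushout_lift n ι i hr G hG1 hG0 g hg


open TensorProduct in
theorem pres_aux {S : Type u} {A1 A0 : Type (max u v)} {P' F : Type u} [CommRing S]
    [AddCommGroup A1] [Module S A1] [AddCommGroup A0] [Module S A0] [AddCommGroup P'] [Module S P']
    [Module.Projective S A1] [Module.Projective S A0] (n : Ideal S) (hn : n * n = n)
    (ι : A1 →ₗ[S] A0) (μ : A0 →ₗ[S] S) (hμι : μ ∘ₗ ι = 0)
    (hb : ∀ b ∈ n, ∃ (t : A0 →ₗ[S] A1) (β : A0), t ∘ₗ ι = b • LinearMap.id ∧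
      (∀ z, μ z • β + ι (t z) = b • z) ∧ μ β = b)
    (G : A0 →ₗ[S] A1) (hG1 : ∀ x, G (ι x) - x ∈ n • (⊤ : Submodule S A1))
    (hG0 : ∀ x, ι (G x) - x ∈ n • (⊤ : Submodule S A0))
    [AddCommGroup F] [Module S F] [Module.Projective S F] (p : F →ₗ[S] P')
    (hps : Function.Surjective p)
    (hP : ∀ a ∈ n, ∃ h : P' →ₗ[S] F, p ∘ₗ h = a • LinearMap.id) :
    ∃ (B1 B0 : Type (max u v)) (_ : AddCommGroup B1) (_ : Module S B1) (_ : AddCommGroup B0)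
      (_ : Module S B0) (_ : Module.Projective S B1) (_ : Module.Projective S B0)
      (d : B1 →ₗ[S] B0) (ρ : B0 →ₗ[S] P'),
      (∀ a ∈ n, ∃ s : B0 →ₗ[S] B1, s ∘ₗ d = a • LinearMap.id) ∧ ρ ∘ₗ d = 0 ∧
      (∀ a ∈ n, ∀ z, ρ z = 0 → a • z ∈ LinearMap.range d) ∧
      (∀ a ∈ n, ∀ y, a • y ∈ LinearMap.range ρ) := by
  let K := LinearMap.ker p
  let i : K →ₗ[S] F := K.subtype
  have hpi : ∀ k, p (i k) = 0 := fun k => k.2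
  have hr : ∀ a ∈ n, ∃ (h : P' →ₗ[S] F) (r : F →ₗ[S] K), ∀ f, i (r f) = a • f - h (p f) := by
    intro a ha
    obtain ⟨h, hh⟩ := hP a ha
    refine ⟨h, LinearMap.codRestrict K (a • LinearMap.id - h ∘ₗ p) ?_, fun f => rfl⟩
    intro f
    have := LinearMap.congr_fun hh (p f)
    change p (a • f - h (p f)) = 0
    rw [map_sub, map_smul]
    exact sub_eq_zero.2 this.symm
  have hii : Function.Injective i := Subtype.val_injective
  have hri : ∀ (a : S) (h : P' →ₗ[S] F) (r : F →ₗ[S] K), (∀ f, i (r f) = a • f - h (p f)) →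
      r ∘ₗ i = a • LinearMap.id := by
    intro a h r hh
    refine LinearMap.ext fun k => hii ?_
    rw [LinearMap.comp_apply, hh, hpi, map_zero, sub_zero]
    simp
  have hproj : Module.Projective S (PushoutMod ι i) := by
    refine pushout_projective n ι i (fun a ha => ?_) G hG1 hG0
    obtain ⟨h, r, hh⟩ := hr a ha
    exact ⟨r, hri _ _ _ hh⟩
  let W := LinearMap.range ((i.lTensor A1).prod (-(ι.rTensor K)))
  let d0 : (A1 ⊗[S] F) × (A0 ⊗[S] K) →ₗ[S] A0 ⊗[S] F :=
    LinearMap.coprod (ι.rTensor F) (i.lTensor A0)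
  have hd0 : W ≤ LinearMap.ker d0 := by
    rw [LinearMap.range_le_ker_iff]
    apply TensorProduct.ext'
    intro x k
    simp [d0]
  let d : PushoutMod ι i →ₗ[S] A0 ⊗[S] F := W.liftQ d0 hd0
  let j1 : A1 ⊗[S] F →ₗ[S] PushoutMod ι i := W.mkQ ∘ₗ LinearMap.inl _ _ _
  let j0 : A0 ⊗[S] K →ₗ[S] PushoutMod ι i := W.mkQ ∘ₗ LinearMap.inr _ _ _
  have hj : ∀ x k, j1 (x ⊗ₜ i k) = j0 (ι x ⊗ₜ k) := by
    intro x k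
    apply (Submodule.Quotient.eq W).2
    exact ⟨x ⊗ₜ k, by simp⟩
  have hdj1 : ∀ w, d (j1 w) = ι.rTensor F w := by
    intro w; simp [d, j1, d0]
  have hdj0 : ∀ w, d (j0 w) = i.lTensor A0 w := by
    intro w; simp [d, j0, d0]
  let ρ : A0 ⊗[S] F →ₗ[S] P' := TensorProduct.lid S P' ∘ₗ TensorProduct.map μ p
  have hρ : ∀ z f, ρ (z ⊗ₜ f) = μ z • p f := by
    intro z f; simp [ρ]
  have hμι' : ∀ x, μ (ι x) = 0 := LinearMap.congr_fun hμι
  refine ⟨PushoutMod ι i, A0 ⊗[S] F, inferInstance, inferInstance, inferInstance, inferInstance,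
    hproj, inferInstance, d, ρ, ?_, ?_, ?_, ?_⟩
  · intro a ha
    rw [← hn] at ha
    refine Submodule.mul_induction_on ha ?_ ?_
    · intro a ha b hb'
      obtain ⟨h, r, hh⟩ := hr a ha
      obtain ⟨t, β, ht, -, -⟩ := hb b hb'
      have hr' := hri _ _ _ hh
      refine ⟨b • (j0 ∘ₗ r.lTensor A0) + j1 ∘ₗ TensorProduct.map t (h ∘ₗ p), ?_⟩
      apply Submodule.linearMap_qext
      apply LinearMap.prod_ext
      · apply TensorProduct.ext'
        intro x f
        change (b • (j0 ∘ₗ r.lTensor A0) + j1 ∘ₗ TensorProduct.map t (h ∘ₗ p)) (d (j1 (x ⊗ₜ f)))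
          = (a * b) • j1 (x ⊗ₜ f)
        rw [hdj1]
        have e1 : t (ι x) = b • x := LinearMap.congr_fun ht x
        simp only [LinearMap.rTensor_tmul, LinearMap.lTensor_tmul, LinearMap.add_apply,
          LinearMap.smul_apply, LinearMap.comp_apply, TensorProduct.map_tmul, e1]
        rw [← hj, hh, tmul_sub, map_sub, ← smul_tmul', map_smul, tmul_smul, map_smul, smul_sub,
          sub_add_cancel, smul_smul, mul_comm]
      · apply TensorProduct.ext'
        intro z k
        change (b • (j0 ∘ₗ r.lTensor A0) + j1 ∘ₗ TensorProduct.map t (h ∘ₗ p)) (d (j0 (z ⊗ₜ k)))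
          = (a * b) • j0 (z ⊗ₜ k)
        rw [hdj0]
        have e1 : r (i k) = a • k := LinearMap.congr_fun hr' k
        simp only [LinearMap.rTensor_tmul, LinearMap.lTensor_tmul, LinearMap.add_apply,
          LinearMap.smul_apply, LinearMap.comp_apply, TensorProduct.map_tmul, e1, hpi]
        rw [map_zero, tmul_zero, map_zero, add_zero, tmul_smul, map_smul, smul_smul, mul_comm]
    · rintro a b ⟨s, hs⟩ ⟨s', hs'⟩
      exact ⟨s + s', by rw [LinearMap.add_comp, hs, hs', add_smul]⟩
  · apply Submodule.linearMap_qext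
    apply LinearMap.prod_ext
    · apply TensorProduct.ext'
      intro x f
      change ρ (d (j1 (x ⊗ₜ f))) = 0
      rw [hdj1, LinearMap.rTensor_tmul, hρ, hμι', zero_smul]
    · apply TensorProduct.ext'
      intro x f
      change ρ (d (j0 (x ⊗ₜ f))) = 0
      rw [hdj0, LinearMap.lTensor_tmul, hρ, hpi, smul_zero]
  · intro b hb' z hz
    obtain ⟨t, β, -, ht, -⟩ := hb b hb'
    let μF : A0 ⊗[S] F →ₗ[S] F := TensorProduct.lid S F ∘ₗ μ.rTensor F
    have h1 : ∀ z, p (μF z) = ρ z := by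
      intro z
      have : p ∘ₗ μF = ρ := by
        apply TensorProduct.ext'
        intro x f
        rw [hρ]
        simp [μF]
      exact LinearMap.congr_fun this z
    have h2 : b • z = β ⊗ₜ μF z + ι.rTensor F (t.rTensor F z) := by
      have : b • LinearMap.id = (TensorProduct.mk S A0 F β) ∘ₗ μF + ι.rTensor F ∘ₗ t.rTensor F := by
        apply TensorProduct.ext'
        intro x f
        have := ht x
        simp only [LinearMap.smul_apply, LinearMap.id_apply, LinearMap.add_apply,
          LinearMap.comp_apply, LinearMap.rTensor_tmul, μF, TensorProduct.mk_apply,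
          LinearEquiv.coe_coe, TensorProduct.lid_tmul]
        rw [tmul_smul, smul_tmul', smul_tmul', ← this, add_tmul]
      exact LinearMap.congr_fun this z
    rw [h2]
    refine add_mem ?_ ⟨_, hdj1 _⟩
    refine ⟨j0 (β ⊗ₜ ⟨μF z, (h1 z).trans hz⟩), ?_⟩
    rw [hdj0]
    rfl
  · intro b hb' y
    obtain ⟨t, β, -, -, hβ⟩ := hb b hb'
    obtain ⟨f, rfl⟩ := hps y
    exact ⟨β ⊗ₜ f, by rw [hρ, hβ]⟩

theorem pres {S : Type u} {A1 A0 : Type (max u v)} {P' : Type u} [CommRing S]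
    [AddCommGroup A1] [Module S A1] [AddCommGroup A0] [Module S A0] [AddCommGroup P'] [Module S P']
    [Module.Projective S A1] [Module.Projective S A0] (n : Ideal S) (hn : n * n = n)
    (ι : A1 →ₗ[S] A0) (μ : A0 →ₗ[S] S) (hμι : μ ∘ₗ ι = 0)
    (hb : ∀ b ∈ n, ∃ (t : A0 →ₗ[S] A1) (β : A0), t ∘ₗ ι = b • LinearMap.id ∧
      (∀ z, μ z • β + ι (t z) = b • z) ∧ μ β = b)
    (G : A0 →ₗ[S] A1) (hG1 : ∀ x, G (ι x) - x ∈ n • (⊤ : Submodule S A1))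
    (hG0 : ∀ x, ι (G x) - x ∈ n • (⊤ : Submodule S A0))
    (hP : FactFree n P') :
    ∃ (B1 B0 : Type (max u v)) (_ : AddCommGroup B1) (_ : Module S B1) (_ : AddCommGroup B0)
      (_ : Module S B0) (_ : Module.Projective S B1) (_ : Module.Projective S B0)
      (d : B1 →ₗ[S] B0) (ρ : B0 →ₗ[S] P'),
      (∀ a ∈ n, ∃ s : B0 →ₗ[S] B1, s ∘ₗ d = a • LinearMap.id) ∧ ρ ∘ₗ d = 0 ∧
      (∀ a ∈ n, ∀ z, ρ z = 0 → a • z ∈ LinearMap.range d) ∧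
      (∀ a ∈ n, ∀ y, a • y ∈ LinearMap.range ρ) :=
  pres_aux.{u, v} n hn ι μ hμι hb G hG1 hG0 (Finsupp.linearCombination S id) (linComb_surj S P') hP


theorem exists_projective_lift' {R : Type u} [CommRing R] {I : Ideal R}
    (hnil : ∃ k : ℕ, I ^ k = ⊥)
    {S : Type*} [CommRing S] [Algebra R S] (hsurj : Function.Surjective (algebraMap R S))
    (hker : RingHom.ker (algebraMap R S) = I)
    (A : Type (max u v)) [AddCommGroup A] [Module S A] [Module R A] [IsScalarTower R S A]
    [Module.Projective S A] :
    ∃ (L : Type (max u v)) (_ : AddCommGroup L) (_ : Module R L), Module.Projective R L ∧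
      ∃ q : L →ₗ[R] A,
      Function.Surjective q ∧ ∀ x, q x = 0 → x ∈ I • (⊤ : Submodule R L) := by
  obtain ⟨L, hL, q, hq, hq'⟩ := exists_projective_lift hnil hsurj hker A
  exact ⟨L, inferInstance, inferInstance, hL, q, hq, hq'⟩

theorem lift_complex {R : Type u} [CommRing R] {I J : Ideal R} (hJ : J * J = J)
    (hnil : ∃ k : ℕ, I ^ k = ⊥)
    {S : Type*} [CommRing S] [Algebra R S] (hsurj : Function.Surjective (algebraMap R S))
    (hker : RingHom.ker (algebraMap R S) = I)
    {A1 A0 : Type (max u v)} {P' : Type*} [AddCommGroup A1] [Module S A1] [Module R A1] [IsScalarTower R S A1]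
    [AddCommGroup A0] [Module S A0] [Module R A0] [IsScalarTower R S A0]
    [Module.Projective S A1] [Module.Projective S A0] [AddCommGroup P'] [Module R P']
    (d : A1 →ₗ[R] A0) (ρ : A0 →ₗ[R] P')
    (hs : ∀ a ∈ J, ∃ s : A0 →ₗ[R] A1, s ∘ₗ d = a • LinearMap.id) (hρd : ρ ∘ₗ d = 0)
    (hρ : ∀ a ∈ J, ∀ z, ρ z = 0 → a • z ∈ LinearMap.range d)
    (hρr : ∀ a ∈ J, ∀ y, a • y ∈ LinearMap.range ρ) :
    ∃ (P : Type (max u v)) (_ : AddCommGroup P) (_ : Module R P),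
      FactFree J P ∧ ∃ σ : P →ₗ[R] P',
      (∀ a ∈ J, ∀ x, σ x = 0 → a • x ∈ I • (⊤ : Submodule R P)) ∧
        (∀ a ∈ J, ∀ y, a • y ∈ LinearMap.range σ) := by
  obtain ⟨L1, _, _, hL1, q1, hq1, hq1'⟩ := exists_projective_lift'.{u, v} hnil hsurj hker A1
  obtain ⟨L0, _, _, hL0, q0, hq0, hq0'⟩ := exists_projective_lift'.{u, v} hnil hsurj hker A0
  obtain ⟨D, hD⟩ := Module.projective_lifting_property q0 (d ∘ₗ q1) hq0
  have hD' : ∀ x, q0 (D x) = d (q1 x) := LinearMap.congr_fun hD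
  have h0 : ∀ a ∈ J, ∃ T : L0 →ₗ[R] L1, ∀ x, a • x - T (D x) ∈ I • (⊤ : Submodule R L1) := by
    intro a ha
    obtain ⟨s, hs⟩ := hs a ha
    obtain ⟨T, hT⟩ := Module.projective_lifting_property q1 (s ∘ₗ q0) hq1
    refine ⟨T, fun x => hq1' _ ?_⟩
    have e1 : q1 (T (D x)) = s (q0 (D x)) := LinearMap.congr_fun hT _
    have e2 : s (d (q1 x)) = a • q1 x := LinearMap.congr_fun hs _
    rw [map_sub, map_smul, e1, hD', e2, sub_self]
  have hj : ∀ j : ℕ, ∀ a ∈ J, ∃ T : L0 →ₗ[R] L1, ∀ x,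
      a • x - T (D x) ∈ I ^ (j+1) • (⊤ : Submodule R L1) := by
    intro j
    induction j with
    | zero => simpa using h0
    | succ j ih =>
      intro a ha
      rw [← hJ] at ha
      refine Submodule.mul_induction_on ha ?_ ?_
      · intro a ha b hb
        obtain ⟨T, hT⟩ := ih a ha
        obtain ⟨T', hT'⟩ := h0 b hb
        refine ⟨a • T' + b • T - T' ∘ₗ D ∘ₗ T, fun x => ?_⟩
        have := map_smul_top_le _ _ (b • LinearMap.id - T' ∘ₗ D) hT' _ (hT x)
        rw [← pow_succ] at this
        convert this using 1
        simp only [LinearMap.sub_apply, LinearMap.add_apply, LinearMap.smul_apply,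
          LinearMap.comp_apply, LinearMap.id_apply, map_sub, map_smul]
        rw [smul_sub, mul_comm, mul_smul, smul_comm a b x]
        abel
      · rintro a b ⟨T, hT⟩ ⟨T', hT'⟩
        refine ⟨T + T', fun x => ?_⟩
        convert add_mem (hT x) (hT' x) using 1
        rw [add_smul, LinearMap.add_apply]
        abel
  have hT : ∀ a ∈ J, ∃ T : L0 →ₗ[R] L1, ∀ x, T (D x) = a • x := by
    obtain ⟨k, hk⟩ := hnil
    intro a ha
    obtain ⟨T, hT⟩ := hj k a ha
    refine ⟨T, fun x => ?_⟩
    have := hT x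
    rw [pow_succ, hk] at this
    simp only [Submodule.bot_smul, Submodule.mem_bot,
      Ideal.bot_mul] at this
    exact (sub_eq_zero.1 this).symm
  refine ⟨L0 ⧸ LinearMap.range D, inferInstance, inferInstance, ?_, ?_⟩
  · intro a ha
    obtain ⟨T, hT⟩ := hT a ha
    refine factFree_of_proj a ((LinearMap.range D).liftQ (a • LinearMap.id - D ∘ₗ T) ?_)
      (LinearMap.range D).mkQ ?_
    · rintro _ ⟨x, rfl⟩
      simp [hT]
    · apply Submodule.linearMap_qext
      refine LinearMap.ext fun x => ?_
      have : (LinearMap.range D).mkQ (D (T x)) = 0 := by simp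
      simp only [LinearMap.comp_apply, Submodule.mkQ_apply, Submodule.liftQ_apply,
        LinearMap.sub_apply, LinearMap.smul_apply, LinearMap.id_apply] at this ⊢
      rw [Submodule.Quotient.mk_sub, this, sub_zero, Submodule.Quotient.mk_smul]
  · have hρd' : ∀ x, ρ (d x) = 0 := LinearMap.congr_fun hρd
    refine ⟨(LinearMap.range D).liftQ (ρ ∘ₗ q0) ?_, ?_, ?_⟩
    · rintro _ ⟨x, rfl⟩
      simp [hD', hρd']
    · intro a ha x hx
      obtain ⟨x, rfl⟩ := (LinearMap.range D).mkQ_surjective x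
      have hx' : ρ (q0 x) = 0 := hx
      obtain ⟨y, hy⟩ := hρ a ha _ hx'
      obtain ⟨y, rfl⟩ := hq1 y
      have h1 := hq0' (a • x - D y) (by rw [map_sub, map_smul, hD', hy, sub_self])
      have h2 := map_smul_top_le _ ⊤ (LinearMap.range D).mkQ (by simp) _ h1
      rw [Ideal.mul_top, map_sub, map_smul] at h2
      have : (LinearMap.range D).mkQ (D y) = 0 := by simp
      rwa [this, sub_zero] at h2
    · intro a ha y
      obtain ⟨z, hz⟩ := hρr a ha y
      obtain ⟨x, rfl⟩ := hq0 z
      exact ⟨(LinearMap.range D).mkQ x, hz⟩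


theorem flat_pure {V P1 P0 M : Type*} [CommRing V] [AddCommGroup P1] [Module V P1]
    [AddCommGroup P0] [Module V P0] [AddCommGroup M] [Module V M] [Module.Flat V M]
    (ι : P1 →ₗ[V] P0) (π : P0 →ₗ[V] M) (hι : Function.Injective ι) (hπ : Function.Surjective π)
    (hex : LinearMap.ker π = LinearMap.range ι) (m : Ideal V) (x : P1)
    (hx : ι x ∈ m • (⊤ : Submodule V P0)) : x ∈ m • (⊤ : Submodule V P1) := by
  classical
  have htop : (⊤ : Submodule V P0) = Submodule.span V (Set.range (id : P0 → P0)) := by simp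
  rw [htop, Submodule.mem_ideal_smul_span_iff_exists_sum] at hx
  obtain ⟨a, ha, hsum⟩ := hx
  have hπι : ∀ x, π (ι x) = 0 := fun x => by
    have : ι x ∈ LinearMap.ker π := hex ▸ ⟨x, rfl⟩
    exact this
  have hs : ∑ y : a.support, a y.1 • (y.1 : P0) = ι x := by
    rw [← hsum, Finsupp.sum]
    exact Finset.sum_coe_sort a.support (fun y => a y • y)
  have h0 : ∑ y : a.support, a y.1 • π y.1 = 0 := by
    have := congrArg π hs
    rw [hπι, map_sum] at this
    simpa using this
  obtain ⟨k, c, z, hz, hc⟩ := Module.Flat.isTrivialRelation_of_sum_smul_eq_zero h0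
  have hz' : ∀ y : a.support, π y.1 = ∑ j, c y j • z j := hz
  have hc' : ∀ j, ∑ y : a.support, a y.1 * c y j = 0 := hc
  choose w hw using fun j => hπ (z j)
  have hxi : ∀ y : a.support, ∃ t : P1, ι t = y.1 - ∑ j, c y j • w j := by
    intro y
    have : y.1 - ∑ j, c y j • w j ∈ LinearMap.ker π := by
      rw [LinearMap.mem_ker, map_sub, map_sum, hz']
      simp [hw]
    rw [hex] at this
    exact this
  choose t ht using hxi
  have hfin : x = ∑ y : a.support, a y.1 • t y := by
    apply hι
    rw [map_sum, ← hs]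
    simp only [map_smul, ht, smul_sub, Finset.sum_sub_distrib, Finset.smul_sum, smul_smul]
    rw [Finset.sum_comm]
    simp only [← Finset.sum_smul, hc']
    simp
  rw [hfin]
  exact Submodule.sum_mem _ fun y _ => Submodule.smul_mem_smul (ha _) trivial

open TensorProduct in
theorem tilde_mem {V : Type*} [CommRing V] (m : Ideal V) (hm : m * m = m) (w : m ⊗[V] m) :
    w ∈ m • (⊤ : Submodule V (m ⊗[V] m)) := by
  induction w with
  | zero => exact zero_mem _
  | add x y hx hy => exact add_mem hx hy
  | tmul x y =>
    obtain ⟨y, hy⟩ := y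
    have key : ∀ y, y ∈ m * m → ∀ hy : y ∈ m, x ⊗ₜ[V] (⟨y, hy⟩ : m) ∈
        m • (⊤ : Submodule V (m ⊗[V] m)) := by
      intro y hy'
      refine Submodule.mul_induction_on' (C := fun y _ => ∀ hy : y ∈ m, x ⊗ₜ[V] (⟨y, hy⟩ : m) ∈
        m • (⊤ : Submodule V (m ⊗[V] m))) ?_ ?_ hy'
      · intro a ha b hb h
        have : (⟨a * b, h⟩ : m) = a • (⟨b, hb⟩ : m) := rfl
        rw [this, tmul_smul]
        exact Submodule.smul_mem_smul ha trivial
      · intro a ha b hb h1 h2 h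
        rw [hm] at ha hb
        have : (⟨a + b, h⟩ : m) = ⟨a, ha⟩ + ⟨b, hb⟩ := rfl
        rw [this, tmul_add]
        exact add_mem (h1 _) (h2 _)
    exact key y (hm.symm ▸ hy) hy

open TensorProduct in
theorem v_data {V : Type*} [CommRing V] (m : Ideal V) (hm : m * m = m)
    [Module.Flat V (m ⊗[V] m)] {P1 P0 : Type*} [AddCommGroup P1] [Module V P1]
    [AddCommGroup P0] [Module V P0] [Module.Projective V P0]
    (ι : P1 →ₗ[V] P0) (π : P0 →ₗ[V] m ⊗[V] m) (hι : Function.Injective ι)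
    (hπ : Function.Surjective π) (hex : LinearMap.ker π = LinearMap.range ι) :
    ∃ μ : P0 →ₗ[V] V, μ ∘ₗ ι = 0 ∧
    (∀ b ∈ m, ∃ (t : P0 →ₗ[V] P1) (β : P0), t ∘ₗ ι = b • LinearMap.id ∧
      (∀ z, μ z • β + ι (t z) = b • z) ∧ μ β = b) ∧
    ∃ G : P0 →ₗ[V] P1, (∀ x, G (ι x) - x ∈ m • (⊤ : Submodule V P1)) ∧
      (∀ x, ι (G x) - x ∈ m • (⊤ : Submodule V P0)) := by
  have hπι : ∀ x, π (ι x) = 0 := fun x => by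
    have : ι x ∈ LinearMap.ker π := hex ▸ ⟨x, rfl⟩
    exact this
  let mu0 : m ⊗[V] m →ₗ[V] V :=
    TensorProduct.lift ((LinearMap.mul V V).compl₁₂ m.subtype m.subtype)
  have hmu0 : ∀ x y : m, mu0 (x ⊗ₜ y) = x.1 * y.1 := fun x y => by simp [mu0]
  have hid : ∀ (x y : m) (w : m ⊗[V] m), mu0 w • (x ⊗ₜ[V] y) = (x.1 * y.1) • w := by
    intro x y w
    induction w with
    | zero => simp
    | add w w' h h' => rw [map_add, add_smul, smul_add, h, h']
    | tmul u v =>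
      have e1 : u.1 • x = x.1 • u := Subtype.ext (mul_comm _ _)
      have e2 : v.1 • y = y.1 • v := Subtype.ext (mul_comm _ _)
      rw [hmu0, mul_smul, mul_smul, ← tmul_smul, ← tmul_smul, e2, smul_tmul', smul_tmul',
        ← smul_tmul, e1, ← smul_tmul, smul_comm]
  refine ⟨mu0 ∘ₗ π, ?_, ?_, ?_⟩
  · ext x; simp [hπι]
  · intro b hb
    rw [← hm] at hb
    refine Submodule.mul_induction_on hb ?_ ?_
    · intro x hx y hy
      obtain ⟨β, hβ⟩ := hπ ((⟨x, hx⟩ : m) ⊗ₜ (⟨y, hy⟩ : m))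
      let f : P0 →ₗ[V] P0 := (x * y) • LinearMap.id - (mu0 ∘ₗ π).smulRight β
      obtain ⟨t, ht⟩ := exists_lift_of_mem_range ι f (by
        intro z
        rw [← hex, LinearMap.mem_ker]
        simp only [f, LinearMap.sub_apply, LinearMap.smul_apply, LinearMap.id_apply,
          LinearMap.smulRight_apply, LinearMap.comp_apply, map_sub, map_smul, hβ, hid, sub_self])
      have ht' : ∀ z, ι (t z) = (x * y) • z - mu0 (π z) • β := LinearMap.congr_fun ht
      refine ⟨t, β, ?_, ?_, ?_⟩
      · refine LinearMap.ext fun z => hι ?_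
        rw [LinearMap.comp_apply, ht', hπι]
        simp
      · intro z
        rw [ht']
        simp
      · simp [hβ, hmu0]
    · rintro a b ⟨t, β, h1, h2, h3⟩ ⟨t', β', h1', h2', h3'⟩
      refine ⟨t + t', β + β', ?_, ?_, ?_⟩
      · rw [LinearMap.add_comp, h1, h1', add_smul]
      · intro z
        rw [add_smul, ← h2, ← h2', LinearMap.add_apply, map_add, smul_add]
        abel
      · rw [map_add, h3, h3']
  · obtain ⟨G, hG⟩ := exists_lift_of_mem_range
      ((m • (⊤ : Submodule V P0)).mkQ ∘ₗ ι) (m • (⊤ : Submodule V P0)).mkQ (by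
      intro z
      have h1 : π z ∈ Submodule.map π (m • ⊤) := by
        rw [Submodule.map_smul'', Submodule.map_top, LinearMap.range_eq_top.2 hπ]
        exact tilde_mem m hm _
      obtain ⟨z', hz', h2⟩ := h1
      have h3 : z - z' ∈ LinearMap.range ι := by
        rw [← hex, LinearMap.mem_ker, map_sub, h2, sub_self]
      obtain ⟨x, hx⟩ := h3
      refine ⟨x, ?_⟩
      refine (Submodule.Quotient.eq _).2 ?_
      rw [hx]
      simpa using hz')
    have hG0 : ∀ z, ι (G z) - z ∈ m • (⊤ : Submodule V P0) := fun z =>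
      (Submodule.Quotient.eq _).1 (LinearMap.congr_fun hG z)
    refine ⟨G, fun x => flat_pure ι π hι hπ hex m _ ?_, hG0⟩
    rw [map_sub]
    exact hG0 _


open TensorProduct in
theorem baseChange_sub_mem {V : Type*} {S : Type*} {P : Type*} [CommRing V] [CommRing S]
    [Algebra V S] [AddCommGroup P] [Module V P] (m : Ideal V) (F : P →ₗ[V] P)
    (hF : ∀ x, F x - x ∈ m • (⊤ : Submodule V P)) (w : S ⊗[V] P) :
    F.baseChange S w - w ∈ (m.map (algebraMap V S)) • (⊤ : Submodule S (S ⊗[V] P)) := by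
  have key : ∀ (s : S) (y : P), y ∈ m • (⊤ : Submodule V P) →
      s ⊗ₜ[V] y ∈ (m.map (algebraMap V S)) • (⊤ : Submodule S (S ⊗[V] P)) := by
    intro s y hy
    refine Submodule.smul_induction_on hy ?_ ?_
    · intro a ha p _
      have : s ⊗ₜ[V] (a • p) = algebraMap V S a • (s ⊗ₜ[V] p) := by
        rw [tmul_smul, algebraMap_smul]
      rw [this]
      exact Submodule.smul_mem_smul (Ideal.mem_map_of_mem _ ha) trivial
    · intro x y hx hy
      rw [tmul_add]
      exact add_mem hx hy
  induction w with
  | zero => simp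
  | add x y hx hy =>
    rw [map_add, add_sub_add_comm]
    exact add_mem hx hy
  | tmul s x =>
    rw [LinearMap.baseChange_tmul, ← tmul_sub]
    exact key s _ (hF x)

open TensorProduct in
theorem s_data {V : Type v} [CommRing V] (m : Ideal V) (hm : m * m = m) {P1 P0 : Type v}
    [AddCommGroup P1] [Module V P1]
    [AddCommGroup P0] [Module V P0] [Module.Projective V P1] [Module.Projective V P0]
    (ι : P1 →ₗ[V] P0) (μ : P0 →ₗ[V] V) (hμι : μ ∘ₗ ι = 0)
    (hb : ∀ b ∈ m, ∃ (t : P0 →ₗ[V] P1) (β : P0), t ∘ₗ ι = b • LinearMap.id ∧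
      (∀ z, μ z • β + ι (t z) = b • z) ∧ μ β = b)
    (G : P0 →ₗ[V] P1) (hG1 : ∀ x, G (ι x) - x ∈ m • (⊤ : Submodule V P1))
    (hG0 : ∀ x, ι (G x) - x ∈ m • (⊤ : Submodule V P0))
    {S : Type u} [CommRing S] [Algebra V S] (n : Ideal S) (hn : n = m.map (algebraMap V S))
    {P' : Type u} [AddCommGroup P'] [Module S P'] (hP : FactFree n P') :
    ∃ (B1 B0 : Type (max u v)) (_ : AddCommGroup B1) (_ : Module S B1) (_ : AddCommGroup B0)
      (_ : Module S B0) (_ : Module.Projective S B1) (_ : Module.Projective S B0)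
      (d : B1 →ₗ[S] B0) (ρ : B0 →ₗ[S] P'),
      (∀ a ∈ n, ∃ s : B0 →ₗ[S] B1, s ∘ₗ d = a • LinearMap.id) ∧ ρ ∘ₗ d = 0 ∧
      (∀ a ∈ n, ∀ z, ρ z = 0 → a • z ∈ LinearMap.range d) ∧
      (∀ a ∈ n, ∀ y, a • y ∈ LinearMap.range ρ) := by
  have hnn : n * n = n := by rw [hn, ← Ideal.map_mul, hm]
  let μS : S ⊗[V] P0 →ₗ[S] S :=
    (TensorProduct.AlgebraTensorModule.rid V S S).toLinearMap ∘ₗ μ.baseChange S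
  have hμS : ∀ s z, μS (s ⊗ₜ z) = μ z • s := fun s z => by simp [μS]
  have hμι' : ∀ x, μ (ι x) = 0 := LinearMap.congr_fun hμι
  refine pres.{u, v} n hnn (ι.baseChange S) μS ?_ ?_ (G.baseChange S) ?_ ?_ hP
  · apply TensorProduct.AlgebraTensorModule.ext
    intro s x
    rw [LinearMap.comp_apply, LinearMap.baseChange_tmul, hμS, hμι']
    simp
  · intro b hbn
    rw [hn] at hbn
    refine Submodule.span_induction (p := fun b _ => ∃ (t : S ⊗[V] P0 →ₗ[S] S ⊗[V] P1)
      (β : S ⊗[V] P0), t ∘ₗ ι.baseChange S = b • LinearMap.id ∧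
      (∀ z, μS z • β + ι.baseChange S (t z) = b • z) ∧ μS β = b) ?_ ?_ ?_ ?_ hbn
    · rintro _ ⟨b, hbm, rfl⟩
      obtain ⟨t, β, h1, h2, h3⟩ := hb b hbm
      refine ⟨t.baseChange S, 1 ⊗ₜ β, ?_, ?_, ?_⟩
      · rw [← LinearMap.baseChange_comp, h1]
        apply TensorProduct.AlgebraTensorModule.ext
        intro s x
        simp [tmul_smul]
      · intro z
        induction z with
        | zero => simp
        | add x y hx hy =>
          rw [map_add, map_add, map_add, smul_add, ← hx, ← hy, add_smul]
          abel
        | tmul s z =>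
          rw [hμS, LinearMap.baseChange_tmul, LinearMap.baseChange_tmul, smul_tmul',
            algebraMap_smul, ← tmul_smul, ← h2, tmul_add, smul_eq_mul, mul_one, tmul_smul,
            smul_tmul']
      · rw [hμS, h3, Algebra.algebraMap_eq_smul_one]
    · exact ⟨0, 0, by simp, by simp, by simp⟩
    · rintro a b _ _ ⟨t, β, h1, h2, h3⟩ ⟨t', β', h1', h2', h3'⟩
      refine ⟨t + t', β + β', ?_, ?_, ?_⟩
      · rw [LinearMap.add_comp, h1, h1', add_smul]
      · intro z
        rw [add_smul, ← h2, ← h2', LinearMap.add_apply, map_add, smul_add]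
        abel
      · rw [map_add, h3, h3']
    · rintro c b _ ⟨t, β, h1, h2, h3⟩
      refine ⟨c • t, c • β, ?_, ?_, ?_⟩
      · rw [LinearMap.smul_comp, h1, smul_smul, smul_eq_mul]
      · intro z
        rw [smul_eq_mul, mul_smul, ← h2, LinearMap.smul_apply, map_smul, smul_add, smul_comm]
      · rw [map_smul, h3]
  · intro x
    rw [hn]
    have := baseChange_sub_mem (S := S) m (G ∘ₗ ι) hG1 x
    rwa [LinearMap.baseChange_comp] at this
  · intro x
    rw [hn]
    have := baseChange_sub_mem (S := S) m (ι ∘ₗ G) hG0 x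
    rwa [LinearMap.baseChange_comp] at this

/-- Let `m·m = m`, with `m̃ = m ⊗_V m` a flat `V`-module of projective
dimension at most `1`.  Let `R` be a `V`-algebra, `I ⊆ R` a nilpotent ideal and
`R' = R/I`.  Let `P'` be an almost projective `R'`-module.  Then:
(i) there are an almost projective `R`-module `P` and an `R`-linear map
`σ : P/IP → P'` which is an almost isomorphism;
(ii) if moreover `P'` is almost finitely presented over `R'`, then `P` may be chosen
almost finitely presented over `R`. -/
theorem lift_almost_projective_along_nilpotent
    (V : Type v) [CommRing V] (m : Ideal V) (hm : m * m = m)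
    (hflat : Module.Flat V (TensorProduct V m m))
    (hpd : ∃ (P₁ P₀ : Type v) (_ : AddCommGroup P₁) (_ : AddCommGroup P₀)
      (_ : Module V P₁) (_ : Module V P₀),
      Module.Projective V P₁ ∧ Module.Projective V P₀ ∧
        ∃ (ι : P₁ →ₗ[V] P₀) (π : P₀ →ₗ[V] TensorProduct V m m),
          Function.Injective ι ∧ Function.Surjective π ∧
            LinearMap.ker π = LinearMap.range ι)
    (R : Type u) [CommRing R] [Algebra V R]
    (I : Ideal R) (hnil : ∃ k : ℕ, I ^ k = ⊥)
    (R' : Type u) [CommRing R'] [Algebra V R'] [Algebra R R'] [IsScalarTower V R R']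
    (hsurj : Function.Surjective (algebraMap R R'))
    (hkerI : RingHom.ker (algebraMap R R') = I)
    (P' : Type u) [AddCommGroup P'] [Module R' P'] [Module R P']
    [IsScalarTower R R' P']
    (hP' : IsAlmostProjective V m R' P') :
    (∃ (P : Type u) (_ : AddCommGroup P) (_ : Module R P),
      IsAlmostProjective V m R P ∧
        ∃ σ : (P ⧸ (I • (⊤ : Submodule R P))) →ₗ[R] P',
          (∀ a ∈ m, ∀ x ∈ LinearMap.ker σ, algebraMap V R a • x = 0) ∧
            (∀ a ∈ m, ∀ y : P', algebraMap V R a • y ∈ LinearMap.range σ)) ∧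
    (IsAlmostFP V m R' P' →
      ∃ (P : Type u) (_ : AddCommGroup P) (_ : Module R P),
        IsAlmostProjective V m R P ∧ IsAlmostFP V m R P ∧
          ∃ σ : (P ⧸ (I • (⊤ : Submodule R P))) →ₗ[R] P',
            (∀ a ∈ m, ∀ x ∈ LinearMap.ker σ, algebraMap V R a • x = 0) ∧
              (∀ a ∈ m, ∀ y : P', algebraMap V R a • y ∈ LinearMap.range σ)) := by
  have hJ : m.map (algebraMap V R) * m.map (algebraMap V R) = m.map (algebraMap V R) := by
    rw [← Ideal.map_mul, hm]
  have hJn : (m.map (algebraMap V R)).map (algebraMap R R') = m.map (algebraMap V R') := by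
    rw [Ideal.map_map, ← IsScalarTower.algebraMap_eq]
  have hIP : ∀ i ∈ I, ∀ y : P', i • y = 0 := by
    intro i hi y
    rw [← hkerI] at hi
    rw [← algebraMap_smul R' i y, (show algebraMap R R' i = 0 from hi), zero_smul]
  have hF : FactFree (m.map (algebraMap V R')) P' := by
    intro a ha
    refine Submodule.span_induction (p := fun a _ => ∃ k : P' →ₗ[R'] (P' →₀ R'),
      Finsupp.linearCombination R' id ∘ₗ k = a • LinearMap.id) ?_ ?_ ?_ ?_ ha
    · rintro _ ⟨b, hb, rfl⟩
      obtain ⟨L, _, _, _, k, p, hk⟩ := ext_one_factor P' (algebraMap V R' b)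
        (fun N x => hP' 1 one_pos N b hb x)
      exact factFree_of_proj _ k p hk
    · exact ⟨0, by simp⟩
    · rintro a b _ _ ⟨k, hk⟩ ⟨l, hl⟩
      exact ⟨k + l, by rw [LinearMap.comp_add, hk, hl, add_smul]⟩
    · rintro c b _ ⟨k, hk⟩
      exact ⟨c • k, by rw [LinearMap.comp_smul, hk, smul_smul, smul_eq_mul]⟩
  have core : ∃ (P : Type u) (_ : AddCommGroup P) (_ : Module R P),
      FactFree (m.map (algebraMap V R)) P ∧
      ∃ σ : P →ₗ[R] P', (∀ a ∈ m.map (algebraMap V R), ∀ x, σ x = 0 →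
          a • x ∈ I • (⊤ : Submodule R P)) ∧
        (∀ a ∈ m.map (algebraMap V R), ∀ y, a • y ∈ LinearMap.range σ) := by
    obtain ⟨P₁, P₀, _, _, _, _, _, _, ι, π, hι, hπ, hex⟩ := hpd
    obtain ⟨μ, hμι, hb, G, hG1, hG0⟩ := v_data m hm ι π hι hπ hex
    obtain ⟨B1, B0, _, _, _, _, _, _, d, ρ, hs, hρd, hρk, hρr⟩ :=
      s_data.{u, v} m hm ι μ hμι hb G hG1 hG0 (S := R') (m.map (algebraMap V R')) rfl hF
    letI : Module R B1 := Module.compHom B1 (algebraMap R R')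
    letI : Module R B0 := Module.compHom B0 (algebraMap R R')
    haveI : IsScalarTower R R' B1 := IsScalarTower.of_algebraMap_smul fun _ _ => rfl
    haveI : IsScalarTower R R' B0 := IsScalarTower.of_algebraMap_smul fun _ _ => rfl
    have hmem : ∀ a ∈ m.map (algebraMap V R), algebraMap R R' a ∈ m.map (algebraMap V R') := by
      intro a ha
      rw [← hJn]
      exact Ideal.mem_map_of_mem _ ha
    obtain ⟨P, _, _, hP, σ, h1, h2⟩ := lift_complex.{u, v} (J := m.map (algebraMap V R)) hJ hnil
      hsurj hkerI (d.restrictScalars R) (ρ.restrictScalars R)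
      (by
        intro a ha
        obtain ⟨s, hs⟩ := hs _ (hmem a ha)
        refine ⟨s.restrictScalars R, LinearMap.ext fun x => ?_⟩
        exact LinearMap.congr_fun hs x)
      (LinearMap.ext fun x => LinearMap.congr_fun hρd x)
      (by
        intro a ha z hz
        obtain ⟨x, hx⟩ := hρk _ (hmem a ha) z hz
        exact ⟨x, hx⟩)
      (by
        intro a ha y
        obtain ⟨x, hx⟩ := hρr _ (hmem a ha) y
        exact ⟨x, hx.trans (algebraMap_smul R' a y)⟩)
    exact exists_small hJ hnil P' P hP σ h1 h2
  obtain ⟨P, _, _, hP, σ, h1, h2⟩ := core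
  have hAP : IsAlmostProjective V m R P := by
    intro i hi N a ha x
    obtain ⟨i, rfl⟩ := Nat.exists_eq_succ_of_ne_zero hi.ne'
    obtain ⟨k, hk⟩ := hP _ (Ideal.mem_map_of_mem (algebraMap V R) ha)
    exact ext_kill_of_factor P _ (P →₀ R) k _ hk i N x
  have hσ : ∃ σ : (P ⧸ (I • (⊤ : Submodule R P))) →ₗ[R] P',
          (∀ a ∈ m, ∀ x ∈ LinearMap.ker σ, algebraMap V R a • x = 0) ∧
            (∀ a ∈ m, ∀ y : P', algebraMap V R a • y ∈ LinearMap.range σ) := by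
    refine ⟨(I • (⊤ : Submodule R P)).liftQ σ ?_, ?_, ?_⟩
    · rw [Submodule.smul_le]
      intro i hi x _
      rw [LinearMap.mem_ker, map_smul, hIP i hi]
    · intro a ha x hx
      obtain ⟨x, rfl⟩ := Submodule.mkQ_surjective _ x
      have := h1 _ (Ideal.mem_map_of_mem (algebraMap V R) ha) x hx
      rw [← map_smul]
      exact (Submodule.Quotient.mk_eq_zero _).2 this
    · intro a ha y
      obtain ⟨x, hx⟩ := h2 _ (Ideal.mem_map_of_mem (algebraMap V R) ha) y
      exact ⟨Submodule.Quotient.mk x, hx⟩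
  refine ⟨⟨P, _, _, hAP, hσ⟩, fun hfp => ⟨P, _, _, hAP, ?_, hσ⟩⟩
  have hfg : ∀ a ∈ m.map (algebraMap V R), ∃ N : Submodule R P', N.FG ∧ ∀ y, a • y ∈ N := by
    intro a ha
    refine Submodule.span_induction (p := fun a _ => ∃ N : Submodule R P', N.FG ∧ ∀ y, a • y ∈ N)
      ?_ ?_ ?_ ?_ ha
    · rintro _ ⟨b, hb, rfl⟩
      obtain ⟨n, k, ψ, φ, hφ, -⟩ := hfp b hb b hb
      haveI : Module.Finite R R' := Module.Finite.of_surjective (Algebra.linearMap R R') hsurj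
      refine ⟨LinearMap.range (φ.restrictScalars R), ?_, fun y => ?_⟩
      · exact Module.Finite.iff_fg.1 inferInstance
      · obtain ⟨x, hx⟩ := hφ y
        refine ⟨x, ?_⟩
        rw [← algebraMap_smul R' (algebraMap V R b) y, ← IsScalarTower.algebraMap_apply]
        exact hx
    · exact ⟨⊥, Submodule.fg_bot, by simp⟩
    · rintro a b _ _ ⟨N, hN, h⟩ ⟨N', hN', h'⟩
      refine ⟨N ⊔ N', hN.sup hN', fun y => ?_⟩
      rw [add_smul]
      exact Submodule.add_mem_sup (h y) (h' y)
    · rintro c b _ ⟨N, hN, h⟩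
      refine ⟨N, hN, fun y => ?_⟩
      rw [smul_assoc]
      exact N.smul_mem c (h y)
  intro ε hε δ hδ
  obtain ⟨n, ψ, φ, h3, h4⟩ := almostFP_of hJ hnil P' P hP σ h1 h2 hfg
    _ (Ideal.mem_map_of_mem (algebraMap V R) hε) _ (Ideal.mem_map_of_mem (algebraMap V R) hδ)
  exact ⟨n, n, ψ, φ, h3, h4⟩
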